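/- Let q1 > 0, 0 < C < 1, g > 0, 0 ≤ t < 1, and s > 0. Define the feasible set F = { a ≥ 0 : (1 − t)·g·q1·e^{−a} ≤ s } and the objective J(a) = (1 − t)(a + C)·q1·e^{−a}·g − C·s. Define a^D(t,s,g) = log( q1·g·(1 − t)/s ) if 0 < s/(q1·g·(1 − t)) ≤ e^{C−1}, and a^D(t,s,g) = 1 − C otherwise. Then a^D(t,s,g) ∈ F and J(a) ≤ J(a^D(t,s,g)) for all a ∈ F; that is, a^D(t,s,g) maximizes J over F. -/

import Mathlib

/-!
Write `K = q1 * g * (1 - t)` for the market size over the remaining time. Up to an additive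
constant the profit is `K` times `f a = (a + C) * exp (-a)`, and `f' a = (1 - (a + C)) * exp (-a)`
changes sign once, at `1 - C`. The stock constraint `K * exp (-a) ≤ s` is a lower bound
`log (K / s) ≤ a` on the price. A unimodal function on a closed upper half-line is maximized at its
peak, or at the endpoint if the peak lies outside.
-/

open Set

theorem isMaxOn_Ici_max_of_monotoneOn_of_antitoneOn {α β : Type*} [LinearOrder α] [Preorder β]
    {f : α → β} {c : α} (hmono : MonotoneOn f (Iic c)) (hanti : AntitoneOn f (Ici c)) (m : α) :
    IsMaxOn f (Ici m) (max c m) := by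
  intro a (hma : m ≤ a)
  have le_right : f a ≤ f (max c a) := by
    rcases le_total a c with hac | hca
    · simpa only [max_eq_left hac] using hmono hac self_mem_Iic hac
    · rw [max_eq_right hca]
  exact le_right.trans <|
    hanti (le_max_left c m) (le_max_left c a) (max_le_max_left c hma)

theorem hasDerivAt_add_mul_exp_neg (C a : ℝ) :
    HasDerivAt (fun x : ℝ => (x + C) * Real.exp (-x)) ((1 - (a + C)) * Real.exp (-a)) a :=
  (((hasDerivAt_id' a).add_const C).mul (hasDerivAt_neg' a).exp).congr_deriv (by ring)

theorem monotoneOn_add_mul_exp_neg (C : ℝ) :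
    MonotoneOn (fun a : ℝ => (a + C) * Real.exp (-a)) (Iic (1 - C)) := by
  refine monotoneOn_of_hasDerivWithinAt_nonneg (convex_Iic _) (by fun_prop)
    (fun a _ => (hasDerivAt_add_mul_exp_neg C a).hasDerivWithinAt) fun a ha => ?_
  rw [interior_Iic, mem_Iio] at ha
  exact mul_nonneg (by linarith) (Real.exp_pos _).le

theorem antitoneOn_add_mul_exp_neg (C : ℝ) :
    AntitoneOn (fun a : ℝ => (a + C) * Real.exp (-a)) (Ici (1 - C)) := by
  refine antitoneOn_of_hasDerivWithinAt_nonpos (convex_Ici _) (by fun_prop)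
    (fun a _ => (hasDerivAt_add_mul_exp_neg C a).hasDerivWithinAt) fun a ha => ?_
  rw [interior_Ici, mem_Ioi] at ha
  exact mul_nonpos_of_nonpos_of_nonneg (by linarith) (Real.exp_pos _).le

theorem isMaxOn_add_mul_exp_neg (C m : ℝ) :
    IsMaxOn (fun a : ℝ => (a + C) * Real.exp (-a)) (Ici m) (max (1 - C) m) :=
  isMaxOn_Ici_max_of_monotoneOn_of_antitoneOn (monotoneOn_add_mul_exp_neg C)
    (antitoneOn_add_mul_exp_neg C) m

section StockConstraint

variable {K s : ℝ} (hK : 0 < K) (hs : 0 < s)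
include hK hs

theorem mul_exp_neg_le_iff_log_div_le {a : ℝ} :
    K * Real.exp (-a) ≤ s ↔ Real.log (K / s) ≤ a := by
  rw [← le_div_iff₀' hK, ← Real.le_log_iff_exp_le (div_pos hs hK), ← inv_div K s, Real.log_inv,
    neg_le_neg_iff]

theorem div_le_exp_neg_iff_le_log_div {a : ℝ} :
    s / K ≤ Real.exp (-a) ↔ a ≤ Real.log (K / s) := by
  rw [← Real.log_le_iff_le_exp (div_pos hs hK), ← inv_div K s, Real.log_inv, neg_le_neg_iff]

theorem ite_div_le_exp_neg_eq_max (a : ℝ) :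
    (if s / K ≤ Real.exp (-a) then Real.log (K / s) else a) = max a (Real.log (K / s)) := by
  simp only [div_le_exp_neg_iff_le_log_div hK hs, max_def]

end StockConstraint

theorem deterministic_exponential_pricing_optimal_general
    (q1 C g t s : ℝ) (hq1 : 0 < q1) (hg : 0 < g) (ht1 : t < 1) (hs : 0 < s)
    (F : Set ℝ)
    (hF : F = {a | 0 ≤ a ∧ (1 - t) * g * (q1 * Real.exp (-a)) ≤ s})
    (J : ℝ → ℝ)
    (hJ : J = fun a => (1 - t) * (a + C) * (q1 * Real.exp (-a)) * g - C * s)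
    (aD : ℝ)
    (haD : aD = max 0 (max (1 - C) (Real.log (q1 * g * (1 - t) / s)))) :
    aD ∈ F ∧ ∀ a ∈ F, J a ≤ J aD := by
  set K := q1 * g * (1 - t)
  have hK : 0 < K := mul_pos (mul_pos hq1 hg) (sub_pos.2 ht1)
  have feasible_eq_Ici : F = Ici (max 0 (Real.log (K / s))) := by
    ext a
    rw [hF, mem_ofPred_eq, mem_Ici, max_le_iff, ← mul_exp_neg_le_iff_log_div_le hK hs,
      show (1 - t) * g * (q1 * Real.exp (-a)) = K * Real.exp (-a) by ring]
  have profit_eq (a : ℝ) : J a = K * ((a + C) * Real.exp (-a)) - C * s := by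
    rw [hJ]; ring
  rw [max_left_comm] at haD
  rw [feasible_eq_Ici, haD]
  refine ⟨mem_Ici.2 (le_max_right _ _), fun a ha => ?_⟩
  rw [profit_eq, profit_eq]
  gcongr K * ?_ - _
  exact isMaxOn_add_mul_exp_neg C _ ha

/-- Deterministic pricing problem with exponential demand `q(a) = q1·e^{-a}`
on `A = [0, ∞)`: the pricing function `a^D(t,s,g)` maximizes the profit
`J(a) = (1-t)(a+C)·q1·e^{-a}·g - C·s` over the feasible set
`F = {a ≥ 0 : (1-t)·g·q1·e^{-a} ≤ s}`. -/
theorem deterministic_exponential_pricing_optimal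
    (q1 C g t s : ℝ) (hq1 : 0 < q1) (hC0 : 0 < C) (hC1 : C < 1) (hg : 0 < g)
    (ht0 : 0 ≤ t) (ht1 : t < 1) (hs : 0 < s)
    (F : Set ℝ)
    (hF : F = {a | 0 ≤ a ∧ (1 - t) * g * (q1 * Real.exp (-a)) ≤ s})
    (J : ℝ → ℝ)
    (hJ : J = fun a => (1 - t) * (a + C) * (q1 * Real.exp (-a)) * g - C * s)
    (aD : ℝ)
    (haD : aD = if s / (q1 * g * (1 - t)) ≤ Real.exp (C - 1)
      then Real.log (q1 * g * (1 - t) / s) else 1 - C) :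
    aD ∈ F ∧ ∀ a ∈ F, J a ≤ J aD := by
  rw [← neg_sub 1 C, ite_div_le_exp_neg_eq_max (mul_pos (mul_pos hq1 hg) (sub_pos.2 ht1)) hs] at haD
  exact deterministic_exponential_pricing_optimal_general q1 C g t s hq1 hg ht1 hs F hF J hJ aD
    (haD.trans (max_eq_right (le_max_of_le_left (sub_nonneg.2 hC1.le))).symm)
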